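/- arXiv:2503.17066 — 4 statements merged into one kernel-verified Lean document; each statement's English description precedes it below -/
import Mathlib

section
/- Let Ξ ≥ 3 be a prime number and let η, ξ, ρ ≥ 0 be integers. Suppose integers μ₁, μ₂, μ₃ ≥ 1 and 1 ≤ ν₁, ν₂, ν₃ ≤ Ξ−1 satisfy the resonance equation Ξ^{-η}(Ξμ₁ − ν₁) + Ξ^{-ξ}(Ξμ₂ − ν₂) = Ξ^{-ρ}(Ξμ₃ − ν₃) in the real numbers. Then one of the following holds: (η = ξ and η ≥ ρ), or (η = ρ and ρ ≥ ξ), or (ξ = ρ and ρ ≥ η). -/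
theorem key_aux (p : ℤ) (hp : 3 ≤ p) (a b c : ℕ) (hb : b < a) (hc : c < a) (m n y z : ℤ)
    (hn : 1 ≤ n ∧ n ≤ p - 1)
    (h : (p : ℝ) ^ (-(a : ℤ)) * ((p : ℝ) * (m : ℝ) - (n : ℝ))
      = (p : ℝ) ^ (-(b : ℤ)) * (y : ℝ) + (p : ℝ) ^ (-(c : ℤ)) * (z : ℝ)) : False := by
  obtain ⟨k, rfl⟩ := Nat.exists_eq_add_of_lt hb
  obtain ⟨l, hl⟩ := Nat.exists_eq_add_of_lt hc
  have hp0 : (p : ℝ) ≠ 0 := by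
    have : p ≠ 0 := by omega
    exact_mod_cast this
  have e1 : (p : ℝ) ^ (b + k + 1) * (p : ℝ) ^ (-((b + k + 1 : ℕ) : ℤ)) = 1 := by
    rw [zpow_neg, zpow_natCast]; exact mul_inv_cancel₀ (pow_ne_zero _ hp0)
  have e2 : (p : ℝ) ^ (b + k + 1) * (p : ℝ) ^ (-(b : ℤ)) = p ^ k * p := by
    rw [zpow_neg, zpow_natCast]; field_simp; ring
  have e3 : (p : ℝ) ^ (b + k + 1) * (p : ℝ) ^ (-(c : ℤ)) = p ^ l * p := by
    rw [hl, zpow_neg, zpow_natCast]; field_simp; ring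
  have e : (p : ℝ) * m - n = p ^ k * p * y + p ^ l * p * z := by
    have := congrArg (fun t => (p : ℝ) ^ (b + k + 1) * t) h
    simp only [mul_add, ← mul_assoc, e1, e2, e3, one_mul] at this
    exact this
  have e' : p * m - n = p ^ k * p * y + p ^ l * p * z := by exact_mod_cast e
  have hd : p ∣ n := ⟨m - p ^ k * y - p ^ l * z, by linear_combination -e'⟩
  have := Int.le_of_dvd (by omega) hd
  omega

/-- resonance equation forces equality of two of the scales,
dominating the third accordingly. -/
theorem stmt_2 (Ξ : ℤ) (hprime : Prime Ξ) (hΞ : 3 ≤ Ξ) (η ξ ρ : ℕ)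
    (μ₁ μ₂ μ₃ ν₁ ν₂ ν₃ : ℤ)
    (hμ₁ : 1 ≤ μ₁) (hμ₂ : 1 ≤ μ₂) (hμ₃ : 1 ≤ μ₃)
    (hν₁ : 1 ≤ ν₁ ∧ ν₁ ≤ Ξ - 1) (hν₂ : 1 ≤ ν₂ ∧ ν₂ ≤ Ξ - 1)
    (hν₃ : 1 ≤ ν₃ ∧ ν₃ ≤ Ξ - 1)
    (hres : (Ξ : ℝ) ^ (-(η : ℤ)) * ((Ξ : ℝ) * (μ₁ : ℝ) - (ν₁ : ℝ))
          + (Ξ : ℝ) ^ (-(ξ : ℤ)) * ((Ξ : ℝ) * (μ₂ : ℝ) - (ν₂ : ℝ))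
          = (Ξ : ℝ) ^ (-(ρ : ℤ)) * ((Ξ : ℝ) * (μ₃ : ℝ) - (ν₃ : ℝ))) :
    (η = ξ ∧ ρ ≤ η) ∨ (η = ρ ∧ ξ ≤ ρ) ∨ (ξ = ρ ∧ η ≤ ρ) := by
  have h1 : ¬ (ξ < η ∧ ρ < η) := fun ⟨ha, hb⟩ =>
    key_aux Ξ hΞ η ξ ρ ha hb μ₁ ν₁ (-(Ξ * μ₂ - ν₂)) (Ξ * μ₃ - ν₃) hν₁
      (by push_cast; linear_combination hres)
  have h2 : ¬ (η < ξ ∧ ρ < ξ) := fun ⟨ha, hb⟩ =>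
    key_aux Ξ hΞ ξ η ρ ha hb μ₂ ν₂ (-(Ξ * μ₁ - ν₁)) (Ξ * μ₃ - ν₃) hν₂
      (by push_cast; linear_combination hres)
  have h3 : ¬ (η < ρ ∧ ξ < ρ) := fun ⟨ha, hb⟩ =>
    key_aux Ξ hΞ ρ η ξ ha hb μ₃ ν₃ (Ξ * μ₁ - ν₁) (Ξ * μ₂ - ν₂) hν₃
      (by push_cast; linear_combination -hres)
  omega
end

section
/- Let A > 0, B > 0 and T > 0 with ABT < 1. Let g : [0, T] → ℝ be a continuous nonnegative function satisfying g(t) ≥ A∫₀ᵗ g(s)² ds + B for every t ∈ [0, T]. Then g(t) ≥ B/(1 − ABt) for every t ∈ [0, T]. -/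
open MeasureTheory intervalIntegral

/-- Gronwall-type lower bound for a continuous nonnegative function
satisfying g(t) ≥ A∫₀ᵗ g(s)² ds + B on [0,T], with ABT < 1. -/
theorem stmt_9 (A B T : ℝ) (hA : 0 < A) (hB : 0 < B) (hT : 0 < T)
    (hABT : A * B * T < 1) (g : ℝ → ℝ)
    (hcont : ContinuousOn g (Set.Icc 0 T))
    (hnonneg : ∀ t ∈ Set.Icc 0 T, 0 ≤ g t)
    (hineq : ∀ t ∈ Set.Icc 0 T, g t ≥ A * (∫ s in (0 : ℝ)..t, (g s) ^ 2) + B) :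
    ∀ t ∈ Set.Icc 0 T, g t ≥ B / (1 - A * B * t) := by
  have hsq : ContinuousOn (fun s => (g s) ^ 2) (Set.Icc 0 T) := hcont.pow 2
  have hint : ∀ t ∈ Set.Icc 0 T, IntervalIntegrable (fun s => (g s) ^ 2) volume 0 t := by
    intro t ht
    apply ContinuousOn.intervalIntegrable
    rw [Set.uIcc_of_le ht.1]
    exact hsq.mono (Set.Icc_subset_Icc_right ht.2)
  set G : ℝ → ℝ := fun t => A * (∫ s in (0 : ℝ)..t, (g s) ^ 2) + B with hG
  have hGpos : ∀ t ∈ Set.Icc 0 T, 0 < G t := by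
    intro t ht
    have : 0 ≤ ∫ s in (0 : ℝ)..t, (g s) ^ 2 :=
      intervalIntegral.integral_nonneg ht.1 (fun s _ => sq_nonneg _)
    simp only [hG]
    positivity
  have hGc : ContinuousOn G (Set.Icc 0 T) := by
    have h1 : ContinuousOn (fun t => ∫ s in (0 : ℝ)..t, (g s) ^ 2) (Set.Icc 0 T) := by
      have := intervalIntegral.continuousOn_primitive_interval (μ := volume)
        (f := fun s => (g s) ^ 2) (a := 0) (b := T)
        (by rw [Set.uIcc_of_le hT.le]; exact hsq.integrableOn_Icc)
      rwa [Set.uIcc_of_le hT.le] at this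
    exact (continuousOn_const.mul h1).add continuousOn_const
  have hder : ∀ t ∈ Set.Ioo 0 T,
      HasDerivAt (fun t => (G t)⁻¹ + A * t) (-(A * (g t) ^ 2) / (G t) ^ 2 + A * 1) t := by
    intro t ht
    have ht' := Set.Ioo_subset_Icc_self ht
    have h1 : HasDerivAt (fun t => ∫ s in (0 : ℝ)..t, (g s) ^ 2) ((g t) ^ 2) t :=
      intervalIntegral.integral_hasDerivAt_right (hint t ht')
        ((hsq.mono Set.Ioo_subset_Icc_self).stronglyMeasurableAtFilter isOpen_Ioo t ht)
        (hsq.continuousAt (Icc_mem_nhds ht.1 ht.2))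
    have h2 : HasDerivAt G (A * (g t) ^ 2) t := (h1.const_mul A).add_const B
    exact (h2.fun_inv (hGpos t ht').ne').add ((hasDerivAt_id t).const_mul A)
  have hanti : AntitoneOn (fun t => (G t)⁻¹ + A * t) (Set.Icc 0 T) := by
    apply antitoneOn_of_deriv_nonpos (convex_Icc 0 T)
    · exact (hGc.inv₀ (fun t ht => (hGpos t ht).ne')).add (by fun_prop)
    · rw [interior_Icc]
      exact fun t ht => (hder t ht).differentiableAt.differentiableWithinAt
    · rw [interior_Icc]
      intro t ht
      have ht' := Set.Ioo_subset_Icc_self ht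
      rw [(hder t ht).deriv]
      have hp := hGpos t ht'
      have hle : G t ≤ g t := hineq t ht'
      have h3 : 1 ≤ (g t) ^ 2 / (G t) ^ 2 := by
        rw [one_le_div (by positivity)]
        gcongr
      have : -(A * (g t) ^ 2) / (G t) ^ 2 + A * 1 = A * (1 - (g t) ^ 2 / (G t) ^ 2) := by ring
      rw [this]
      exact mul_nonpos_of_nonneg_of_nonpos hA.le (by linarith)
  intro t ht
  have h0 := hanti (Set.left_mem_Icc.2 hT.le) ht ht.1
  have hG0 : G 0 = B := by simp [hG]
  simp only [hG0, mul_zero, add_zero] at h0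
  have hp := hGpos t ht
  have hd : 0 < 1 - A * B * t := by
    have : A * B * t ≤ A * B * T := by gcongr; exact ht.2
    linarith
  refine le_trans ?_ (hineq t ht)
  change B / (1 - A * B * t) ≤ G t
  rw [div_le_iff₀ hd]
  have h4 := mul_le_mul_of_nonneg_left h0 (mul_pos hp hB).le
  have e1 : G t * B * ((G t)⁻¹ + A * t) = B + G t * (A * B * t) := by field_simp
  have e2 : G t * B * B⁻¹ = G t := by field_simp
  rw [e1, e2] at h4
  linarith
end

section
/- Let A > 0, B > 0 and T > 0 with ABT < 1. Let X : [0, T] → ℝ be a differentiable function with X(0) = 0 satisfying the differential inequality X'(t) ≥ (A X(t) + B)² for every t ∈ [0, T]. Then X(t) ≥ B² t/(1 − ABt) for every t ∈ [0, T]. -/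
/-- the solution of the differential inequality
X' ≥ (AX + B)², X(0) = 0, satisfies X(t) ≥ B²t/(1 − ABt) on [0,T] when ABT < 1. -/
theorem stmt_10 (A B T : ℝ) (hA : 0 < A) (hB : 0 < B) (hT : 0 < T)
    (hABT : A * B * T < 1) (X X' : ℝ → ℝ) (hX0 : X 0 = 0)
    (hderiv : ∀ t ∈ Set.Icc 0 T, HasDerivWithinAt X (X' t) (Set.Icc 0 T) t)
    (hineq : ∀ t ∈ Set.Icc 0 T, X' t ≥ (A * X t + B) ^ 2) :
    ∀ t ∈ Set.Icc 0 T, X t ≥ B ^ 2 * t / (1 - A * B * t) := by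
  have hsub : interior (Set.Icc 0 T) ⊆ Set.Icc 0 T := interior_subset
  have h0 : (0:ℝ) ∈ Set.Icc 0 T := ⟨le_refl _, hT.le⟩
  have hmono : MonotoneOn X (Set.Icc 0 T) := by
    apply monotoneOn_of_hasDerivWithinAt_nonneg (f' := X') (convex_Icc 0 T)
    · exact fun t ht => (hderiv t ht).continuousWithinAt
    · exact fun t ht => (hderiv t (hsub ht)).mono hsub
    · exact fun t ht => le_trans (sq_nonneg _) (hineq t (hsub ht))
  have hu : ∀ t ∈ Set.Icc 0 T, 0 < A * X t + B := by
    intro t ht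
    have h1 := hmono h0 ht ht.1
    rw [hX0] at h1
    positivity
  have hd : ∀ t ∈ Set.Icc 0 T, HasDerivWithinAt (fun t => -(A * X t + B)⁻¹ - A * t)
      (-(-(A * X' t) / (A * X t + B) ^ 2) - A * 1) (Set.Icc 0 T) t := by
    intro t ht
    exact ((((hderiv t ht).const_mul A).add_const B).fun_inv (hu t ht).ne').fun_neg.fun_sub
      ((hasDerivWithinAt_id t _).const_mul A)
  have hg : MonotoneOn (fun t => -(A * X t + B)⁻¹ - A * t) (Set.Icc 0 T) := by
    apply monotoneOn_of_hasDerivWithinAt_nonneg (convex_Icc 0 T)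
    · exact fun t ht => (hd t ht).continuousWithinAt
    · exact fun t ht => (hd t (hsub ht)).mono hsub
    · intro t ht
      have h1 := hineq t (hsub ht)
      have h2 := pow_pos (hu t (hsub ht)) 2
      have h3 : A ≤ A * X' t / (A * X t + B) ^ 2 := by
        rw [le_div_iff₀ h2]
        exact mul_le_mul_of_nonneg_left h1 hA.le
      rw [neg_div, neg_neg]
      linarith
  intro t ht
  have h1 := hg h0 ht ht.1
  simp only [hX0, mul_zero, zero_add, sub_zero] at h1
  have hp := hu t ht
  have hAB : 0 < A * B := mul_pos hA hB
  have hden : 0 < 1 - A * B * t := by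
    have := mul_le_mul_of_nonneg_left ht.2 hAB.le
    linarith
  have h2 : (A * X t + B)⁻¹ ≤ B⁻¹ - A * t := by linarith
  have h3 : B ≤ (1 - A * B * t) * (A * X t + B) := by
    have := mul_le_mul_of_nonneg_left h2 (mul_pos hB hp).le
    have e1 : B * (A * X t + B) * (A * X t + B)⁻¹ = B := by
      rw [mul_assoc, mul_inv_cancel₀ hp.ne', mul_one]
    have e2 : B * (A * X t + B) * (B⁻¹ - A * t) = (1 - A * B * t) * (A * X t + B) := by
      field_simp
    linarith
  rw [ge_iff_le, div_le_iff₀ hden]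
  refine le_of_mul_le_mul_left ?_ hA
  linarith
end

section
/- Let Ξ ≥ 3 be a prime number, let 𝔇 > 1 and R > 0. Let A be the set of finite Borel measures μ on ℝ such that (i) μ(ℝ \ ({0} ∪ ⋃_{η≥0} Θ_η)) = 0, (ii) 𝔇^η · μ(Θ_η) ≤ R for every integer η ≥ 0, and (iii) μ({0}) ≤ R. If (μ_n) is a sequence of measures in A that converges weakly to a finite Borel measure μ (i.e. ∫ φ dμ_n → ∫ φ dμ for every bounded continuous function φ : ℝ → ℝ), then μ ∈ A. -/
open MeasureTheory Filter

/-- The lattice layer `Θ_η = {Ξ^{-η}(Ξμ − ν) : μ ≥ 1, 1 ≤ ν ≤ Ξ−1} ⊆ ℝ`. -/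
def Theta (Ξ : ℤ) (η : ℕ) : Set ℝ :=
  {x | ∃ μ ν : ℤ, 1 ≤ μ ∧ 1 ≤ ν ∧ ν ≤ Ξ - 1 ∧
    x = (Ξ : ℝ) ^ (-(η : ℤ)) * ((Ξ : ℝ) * (μ : ℝ) - (ν : ℝ))}

/-- Membership in the set A: (i) the measure is concentrated on {0} ∪ ⋃ Θ_η,
(ii) 𝔇^η μ(Θ_η) ≤ R for all η ≥ 0, (iii) μ({0}) ≤ R. -/
def MemA (Ξ : ℤ) (D R : ℝ) (μ : Measure ℝ) : Prop :=
  μ (({0} ∪ ⋃ η : ℕ, Theta Ξ η)ᶜ) = 0 ∧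
  (∀ η : ℕ, ENNReal.ofReal (D ^ η) * μ (Theta Ξ η) ≤ ENNReal.ofReal R) ∧
  μ {0} ≤ ENNReal.ofReal R


lemma open_le_aux (μs : ℕ → Measure ℝ) (μ : Measure ℝ)
    [∀ n, IsFiniteMeasure (μs n)] [IsFiniteMeasure μ]
    (hconv : ∀ φ : BoundedContinuousFunction ℝ ℝ,
      Tendsto (fun n => ∫ x, φ x ∂(μs n)) atTop (nhds (∫ x, φ x ∂μ)))
    (U : Set ℝ) (hU : IsOpen U) (c : ENNReal) (hc : ∀ n, μs n U ≤ c) : μ U ≤ c := by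
  let νs : ℕ → FiniteMeasure ℝ := fun n => ⟨μs n, inferInstance⟩
  let ν : FiniteMeasure ℝ := ⟨μ, inferInstance⟩
  have hT : Tendsto νs atTop (nhds ν) :=
    FiniteMeasure.tendsto_iff_forall_integral_tendsto.2 hconv
  have hF := FiniteMeasure.limsup_measure_closed_le_of_tendsto hT hU.isClosed_compl
  have hM : Tendsto (fun n => μs n Set.univ) atTop (nhds (μ Set.univ)) := by
    have := ENNReal.tendsto_coe.2 (hT.mass)
    simp only [FiniteMeasure.ennreal_mass] at this
    exact this
  have key : μ Set.univ ≤ c + μ Uᶜ := by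
    apply ENNReal.le_of_forall_pos_le_add
    intro ε hε _
    have hlt : μ Uᶜ < μ Uᶜ + ε :=
      ENNReal.lt_add_right (measure_ne_top _ _) (by simpa using hε.ne')
    have hev := eventually_lt_of_limsup_lt (lt_of_le_of_lt hF hlt)
    refine le_of_tendsto hM ?_
    filter_upwards [hev] with n hn
    rw [← measure_add_measure_compl hU.measurableSet, add_assoc]
    exact add_le_add (hc n) hn.le
  rw [← measure_add_measure_compl hU.measurableSet] at key
  exact (ENNReal.add_le_add_iff_right (measure_ne_top _ _)).1 key

lemma closed_aux (a : ℝ) (ha : a ≠ 0) (S : Set ℝ) (hS : ∀ x ∈ S, ∃ k : ℤ, x = a * k) :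
    IsClosed S := by
  have h1 := (Homeomorph.mulLeft₀ a ha).isClosedEmbedding.comp Int.isClosedEmbedding_coe_real
  have h2 := h1.isClosedMap _
    (isClosed_discrete (((Homeomorph.mulLeft₀ a ha) ∘ ((↑) : ℤ → ℝ)) ⁻¹' S))
  rw [Set.image_preimage_eq_of_subset] at h2
  · exact h2
  · intro x hx
    obtain ⟨k, hk⟩ := hS x hx
    exact ⟨k, by simp [hk]⟩

lemma theta_aux (Ξ : ℤ) (hΞ : 3 ≤ Ξ) (N j : ℕ) (hj : j ≤ N) (x : ℝ) (hx : x ∈ Theta Ξ j) :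
    ∃ k : ℤ, x = ((Ξ : ℝ) ^ N)⁻¹ * k := by
  obtain ⟨m, v, -, -, -, rfl⟩ := hx
  have h0 : (Ξ : ℝ) ≠ 0 := by
    have : Ξ ≠ 0 := by omega
    exact_mod_cast this
  obtain ⟨d, rfl⟩ := Nat.exists_eq_add_of_le hj
  refine ⟨Ξ ^ d * (Ξ * m - v), ?_⟩
  push_cast
  rw [zpow_neg, zpow_natCast, pow_add]
  field_simp

lemma main_aux (Ξ : ℤ) (hΞ : 3 ≤ Ξ)
    (D R : ℝ) (hD : 1 < D)
    (μs : ℕ → Measure ℝ) (μ : Measure ℝ)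
    [∀ n, IsFiniteMeasure (μs n)] [IsFiniteMeasure μ]
    (hmem : ∀ n, MemA Ξ D R (μs n))
    (hconv : ∀ φ : BoundedContinuousFunction ℝ ℝ,
      Tendsto (fun n => ∫ x, φ x ∂(μs n)) atTop (nhds (∫ x, φ x ∂μ)))
    (T : Set ℝ) (c : ENNReal) (hc : ∀ n, μs n T ≤ c) :
    μ (T ∪ ({0} ∪ ⋃ η : ℕ, Theta Ξ η)ᶜ) ≤ c := by
  set q : ENNReal := ENNReal.ofReal D with hq
  have hq1 : 1 < q := by simpa [hq] using hD
  have hqt : q ≠ ⊤ := ENNReal.ofReal_ne_top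
  have hth : ∀ n j, μs n (Theta Ξ j) ≤ ENNReal.ofReal R * q⁻¹ ^ j := by
    intro n j
    have := (hmem n).2.1 j
    rw [ENNReal.ofReal_pow (by linarith)] at this
    rw [← ENNReal.inv_pow, ← div_eq_mul_inv]
    rw [ENNReal.le_div_iff_mul_le (Or.inl (pow_ne_zero _ (by positivity)))
      (Or.inl (ENNReal.pow_ne_top hqt)), mul_comm]
    exact this
  have hsum : ∑' j, ENNReal.ofReal R * q⁻¹ ^ j ≠ ⊤ := by
    rw [ENNReal.tsum_mul_left]
    exact ENNReal.mul_ne_top ENNReal.ofReal_ne_top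
      (tsum_geometric_lt_top.2 (ENNReal.inv_lt_one.2 hq1)).ne
  have htail := (ENNReal.tendsto_sum_nat_add _ hsum).const_add c
  rw [add_zero] at htail
  refine ge_of_tendsto' htail fun N => ?_
  set F : Set ℝ := {0} ∪ ⋃ j ∈ Set.Iio N, Theta Ξ j with hF
  have hsub : T ∪ ({0} ∪ ⋃ η : ℕ, Theta Ξ η)ᶜ ⊆ (F \ T)ᶜ := by
    intro x hx hxF
    rcases hx with hx | hx
    · exact hxF.2 hx
    · apply hx
      rcases hxF.1 with h | h
      · exact Or.inl h
      · right
        simp only [Set.mem_iUnion] at h ⊢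
        obtain ⟨j, _, h⟩ := h
        exact ⟨j, h⟩
  refine (measure_mono hsub).trans ?_
  have hopen : IsOpen (F \ T)ᶜ := by
    rw [isOpen_compl_iff]
    have h0 : (Ξ : ℝ) ≠ 0 := by
      have : Ξ ≠ 0 := by omega
      exact_mod_cast this
    refine closed_aux ((Ξ : ℝ) ^ N)⁻¹ (by positivity) _ ?_
    rintro x ⟨hx | hx, -⟩
    · exact ⟨0, by simpa using hx⟩
    · simp only [Set.mem_iUnion] at hx
      obtain ⟨j, hj, hx⟩ := hx
      exact theta_aux Ξ hΞ N j (le_of_lt hj) x hx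
  refine open_le_aux μs μ hconv _ hopen _ fun n => ?_
  have hs2 : (F \ T)ᶜ ⊆ T ∪ (({0} ∪ ⋃ η : ℕ, Theta Ξ η)ᶜ ∪ ⋃ k : ℕ, Theta Ξ (k + N)) := by
    intro x hx
    by_cases hxT : x ∈ T
    · exact Or.inl hxT
    right
    by_cases hxG : x ∈ ({0} ∪ ⋃ η : ℕ, Theta Ξ η : Set ℝ)
    · right
      have hxF : x ∉ F := fun h => hx ⟨h, hxT⟩
      rcases hxG with h | h
      · exact absurd (Or.inl h) hxF
      · obtain ⟨j, hj⟩ := Set.mem_iUnion.1 h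
        rcases lt_or_ge j N with hjN | hjN
        · exact absurd (Or.inr (Set.mem_biUnion (show j ∈ Set.Iio N from hjN) hj)) hxF
        · refine Set.mem_iUnion.2 ⟨j - N, ?_⟩
          rwa [Nat.sub_add_cancel hjN]
    · exact Or.inl hxG
  refine (measure_mono hs2).trans ((measure_union_le _ _).trans (add_le_add (hc n) ?_))
  refine (measure_union_le _ _).trans ?_
  rw [(hmem n).1, zero_add]
  exact (measure_iUnion_le _).trans (ENNReal.tsum_le_tsum fun k => hth n (k + N))

/-- the set A is closed under weak convergence of finite Borel
measures. -/
theorem stmt_14 (Ξ : ℤ) (hprime : Prime Ξ) (hΞ : 3 ≤ Ξ)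
    (D R : ℝ) (hD : 1 < D) (hR : 0 < R)
    (μs : ℕ → Measure ℝ) (μ : Measure ℝ)
    [∀ n, IsFiniteMeasure (μs n)] [IsFiniteMeasure μ]
    (hmem : ∀ n, MemA Ξ D R (μs n))
    (hconv : ∀ φ : BoundedContinuousFunction ℝ ℝ,
      Tendsto (fun n => ∫ x, φ x ∂(μs n)) atTop (nhds (∫ x, φ x ∂μ))) :
    MemA Ξ D R μ := by
  have key := main_aux Ξ hΞ D R hD μs μ hmem hconv
  refine ⟨?_, fun η => ?_, ?_⟩
  · have := key ∅ 0 (by simp)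
    simpa using this
  · have hpos : 0 < D ^ η := by positivity
    have h0 : ENNReal.ofReal (D ^ η) ≠ 0 := by simpa using hpos
    have := key (Theta Ξ η) (ENNReal.ofReal R / ENNReal.ofReal (D ^ η)) (fun n => by
      rw [ENNReal.le_div_iff_mul_le (Or.inl h0) (Or.inl ENNReal.ofReal_ne_top), mul_comm]
      exact (hmem n).2.1 η)
    have h2 := (measure_mono Set.subset_union_left).trans this
    rwa [ENNReal.le_div_iff_mul_le (Or.inl h0) (Or.inl ENNReal.ofReal_ne_top), mul_comm] at h2
  · exact (measure_mono Set.subset_union_left).trans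
      (key {0} (ENNReal.ofReal R) (fun n => (hmem n).2.2))
end
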